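/- Let 𝔤 be a finite-dimensional real vector space with a nondegenerate symmetric bilinear form B, and let 𝔲₊, 𝔥, 𝔲₋ ⊆ 𝔤 be subspaces with 𝔤 = 𝔲₊ ⊕ 𝔥 ⊕ 𝔲₋ (internal direct sum). Set 𝔭₊ := 𝔥 + 𝔲₊ and 𝔭₋ := 𝔥 + 𝔲₋, and assume B(𝔭₊, 𝔲₊) = 0 and B(𝔭₋, 𝔲₋) = 0. Then the restriction of B to 𝔥 is nondegenerate. -/

import Mathlib

/-- If `𝔤 = 𝔲₊ ⊕ 𝔥 ⊕ 𝔲₋` with `B` nondegenerate symmetric, `B(𝔭₊, 𝔲₊) = 0` and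
`B(𝔭₋, 𝔲₋) = 0` where `𝔭± = 𝔥 + 𝔲±`, then the restriction of `B` to `𝔥` is
nondegenerate. -/
theorem restriction_nondegenerate {V : Type*} [AddCommGroup V] [Module ℝ V]
    [FiniteDimensional ℝ V]
    (B : LinearMap.BilinForm ℝ V)
    (hsymm : ∀ x y : V, B x y = B y x)
    (hnd : ∀ x : V, (∀ y : V, B x y = 0) → x = 0)
    (uP h uM : Submodule ℝ V)
    (hdirect : DirectSum.IsInternal (![uP, h, uM] : Fin 3 → Submodule ℝ V))
    (hP : ∀ x ∈ h ⊔ uP, ∀ y ∈ uP, B x y = 0)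
    (hM : ∀ x ∈ h ⊔ uM, ∀ y ∈ uM, B x y = 0) :
    ∀ x ∈ h, (∀ y ∈ h, B x y = 0) → x = 0 := by
  intro x hx hxh
  apply hnd x
  have htop := hdirect.submodule_iSup_eq_top
  have hle : (⨆ i, (![uP, h, uM] : Fin 3 → Submodule ℝ V) i) ≤ LinearMap.ker (B x) := by
    refine iSup_le fun i => ?_
    fin_cases i
    · exact fun y hy => hP x (Submodule.mem_sup_left hx) y hy
    · exact fun y hy => hxh y hy
    · exact fun y hy => hM x (Submodule.mem_sup_left hx) y hy
  intro y
  have hy : y ∈ LinearMap.ker (B x) := hle (htop ▸ Submodule.mem_top)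
  exact hy
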